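/- arXiv:math/0701265 — 2 statements merged into one kernel-verified Lean document; each statement's English description precedes it below -/
import Mathlib

section
/- Let K > 0 and β > 0. The map F : ℝ × X_β → ℂ^ℤ defined componentwise by F(τ,c)_n := i n τ e^{inτ} c_n + K Σ_{k=0}^∞ ((-1)^k/(2k+1)!) (c^{*(2k+1)})_n is well defined and continuous, where X_β and ℂ^ℤ carry the product (componentwise) topology. -/
open scoped Real
open Complex Filter

/-- Convolution of two two-sided sequences of complex numbers. -/
noncomputable def conv (x y : ℤ → ℂ) : ℤ → ℂ := fun n => ∑' k : ℤ, x k * y (n - k)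

/-- `convPow x k` is the `k`-fold convolution power `x^{*k}`;
`x^{*0}` is the unit (Kronecker delta at `0`). -/
noncomputable def convPow (x : ℤ → ℂ) : ℕ → ℤ → ℂ
  | 0 => fun n => if n = 0 then 1 else 0
  | k + 1 => conv (convPow x k) x

/-- Membership in `X_β`: decay `|x_n| ≤ β/(|n|+1)^2` and the symmetry `x_{-n} = conj x_n`. -/
def memX (β : ℝ) (x : ℤ → ℂ) : Prop :=
  (∀ n : ℤ, ‖x n‖ ≤ β / (|(n : ℝ)| + 1) ^ 2) ∧ (∀ n : ℤ, x (-n) = starRingEnd ℂ (x n))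

/-- The map `F(τ,c)_n = i n τ e^{inτ} c_n + K Σ_k ((-1)^k/(2k+1)!) (c^{*(2k+1)})_n`. -/
noncomputable def Fmap (K τ : ℝ) (c : ℤ → ℂ) : ℤ → ℂ := fun n =>
  Complex.I * n * τ * Complex.exp (Complex.I * n * τ) * c n +
    K * ∑' k : ℕ, ((-1) ^ k / (Nat.factorial (2 * k + 1) : ℂ)) * convPow c (2 * k + 1) n

/-!
If the moduli of `x` are dominated by a sequence with sum `S`, then convolving with `x` multiplies
sup bounds by at most `S`, so `|(x^{*k})_n| ≤ S ^ k` and the sine series is dominated by the series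
of `sinh S`. All these bounds are uniform in `x`, so each of the infinite sums is continuous in the
coordinates of `x` by the Weierstrass M-test. On `X_β` the dominating sequence is `β / (|n| + 1)²`.
-/

lemma summable_div_abs_add_one_pow (C : ℝ) {p : ℕ} (hp : 1 < p) :
    Summable fun n : ℤ => C / (|(n : ℝ)| + 1) ^ p := by
  have summable_nat : Summable fun n : ℕ => C / ((n : ℝ) + 1) ^ p := by
    simpa [div_eq_mul_inv] using
      ((summable_nat_add_iff 1).2 (Real.summable_one_div_nat_pow.2 hp)).mul_left C
  exact .of_nat_of_neg (by simpa using summable_nat) (by simpa using summable_nat)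

section Majorant

variable {b : ℤ → ℝ} {S : ℝ}

lemma hasSum_mul_comp_sub_left (M : ℝ) (hb : HasSum b S) (n : ℤ) :
    HasSum (fun k => M * b (n - k)) (M * S) :=
  ((Equiv.subLeft n).hasSum_iff.2 hb).mul_left M

lemma norm_mul_comp_sub_left_le {x y : ℤ → ℂ} {M : ℝ} (hx : ∀ k, ‖x k‖ ≤ M)
    (hy : ∀ k, ‖y k‖ ≤ b k) (n k : ℤ) : ‖x k * y (n - k)‖ ≤ M * b (n - k) :=
  norm_mul_le_of_le (hx k) (hy (n - k))

lemma norm_conv_le {x y : ℤ → ℂ} {M : ℝ} (hb : HasSum b S) (hx : ∀ k, ‖x k‖ ≤ M)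
    (hy : ∀ k, ‖y k‖ ≤ b k) (n : ℤ) : ‖conv x y n‖ ≤ M * S :=
  tsum_of_norm_bounded (hasSum_mul_comp_sub_left M hb n) (norm_mul_comp_sub_left_le hx hy n)

lemma norm_convPow_le {x : ℤ → ℂ} (hb : HasSum b S) (hx : ∀ n, ‖x n‖ ≤ b n) (k : ℕ) (n : ℤ) :
    ‖convPow x k n‖ ≤ S ^ k := by
  induction k generalizing n with
  | zero => by_cases hn : n = 0 <;> simp [convPow, hn]
  | succ k ih => exact norm_conv_le hb ih hx n

lemma norm_mul_convPow_le {x : ℤ → ℂ} (hb : HasSum b S) (hx : ∀ n, ‖x n‖ ≤ b n) (a : ℂ) (k : ℕ)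
    (n : ℤ) : ‖a * convPow x k n‖ ≤ ‖a‖ * S ^ k :=
  norm_mul_le_of_le le_rfl (norm_convPow_le hb hx k n)

variable {T : Type*} [TopologicalSpace T]

lemma continuous_conv {x y : T → ℤ → ℂ} {M : ℝ} (hb : Summable b) (hx : Continuous x)
    (hy : Continuous y) (hxM : ∀ t k, ‖x t k‖ ≤ M) (hyb : ∀ t k, ‖y t k‖ ≤ b k) :
    Continuous fun t => conv (x t) (y t) :=
  continuous_pi fun n => continuous_tsum (fun k => by fun_prop)
    (hasSum_mul_comp_sub_left M hb.hasSum n).summable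
    fun k t => norm_mul_comp_sub_left_le (hxM t) (hyb t) n k

lemma continuous_convPow {x : T → ℤ → ℂ} (hb : Summable b) (hx : Continuous x)
    (hxb : ∀ t n, ‖x t n‖ ≤ b n) (k : ℕ) : Continuous fun t => convPow (x t) k := by
  induction k with
  | zero => exact continuous_const
  | succ k ih =>
    exact continuous_conv hb ih hx (fun t => norm_convPow_le hb.hasSum (hxb t) k) hxb

variable {ι : Type*} {a : ι → ℂ} {e : ι → ℕ}

lemma summable_norm_mul_convPow {x : ℤ → ℂ} (hb : HasSum b S) (hx : ∀ n, ‖x n‖ ≤ b n)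
    (ha : Summable fun i => ‖a i‖ * S ^ e i) (n : ℤ) :
    Summable fun i => ‖a i * convPow x (e i) n‖ :=
  .of_nonneg_of_le (fun _ => norm_nonneg _)
    (fun i => norm_mul_convPow_le hb hx (a i) (e i) n) ha

lemma continuous_tsum_mul_convPow {x : T → ℤ → ℂ} (hb : HasSum b S) (hx : Continuous x)
    (hxb : ∀ t n, ‖x t n‖ ≤ b n) (ha : Summable fun i => ‖a i‖ * S ^ e i) (n : ℤ) :
    Continuous fun t => ∑' i, a i * convPow (x t) (e i) n := by
  have continuous_coord (k : ℕ) : Continuous fun t => convPow (x t) k n :=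
    (continuous_apply n).comp (continuous_convPow hb.summable hx hxb k)
  exact continuous_tsum (fun i => (continuous_coord (e i)).const_mul (a i)) ha
    fun i t => norm_mul_convPow_le hb (hxb t) (a i) (e i) n

end Majorant

lemma summable_norm_sin_coeff_mul_pow (S : ℝ) :
    Summable fun k : ℕ => ‖(-1) ^ k / (Nat.factorial (2 * k + 1) : ℂ)‖ * S ^ (2 * k + 1) := by
  simpa [div_eq_inv_mul] using (Real.hasSum_sinh S).summable

lemma continuous_Fmap (K : ℝ) {b : ℤ → ℝ} (hb : Summable b) {T : Type*} [TopologicalSpace T]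
    {τ : T → ℝ} {x : T → ℤ → ℂ} (hτ : Continuous τ) (hx : Continuous x)
    (hxb : ∀ t n, ‖x t n‖ ≤ b n) : Continuous fun t => Fmap K (τ t) (x t) := by
  refine continuous_pi fun n => ?_
  have continuous_linear_part :
      Continuous fun t => I * n * τ t * exp (I * n * τ t) * x t n := by fun_prop
  have continuous_sin_series := continuous_tsum_mul_convPow hb.hasSum hx hxb
    (summable_norm_sin_coeff_mul_pow _) n
  exact continuous_linear_part.add (continuous_sin_series.const_mul (K : ℂ))

theorem Fmap_well_defined_and_continuous_general (K : ℝ) {b : ℤ → ℝ} (hb : Summable b)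
    {X : Set (ℤ → ℂ)} (hX : ∀ x ∈ X, ∀ n, ‖x n‖ ≤ b n) :
    (∀ c ∈ X, ∀ n : ℤ,
      Summable (fun k : ℕ =>
        ‖((-1) ^ k / (Nat.factorial (2 * k + 1) : ℂ)) * convPow c (2 * k + 1) n‖)) ∧
    Continuous (fun p : ℝ × X => Fmap K p.1 p.2.val) :=
  ⟨fun c hc =>
      summable_norm_mul_convPow hb.hasSum (hX c hc) (summable_norm_sin_coeff_mul_pow _),
    continuous_Fmap K hb continuous_fst (by fun_prop) fun p => hX p.2 p.2.property⟩

/-- `F` is well defined (the series converge absolutely on `X_β`) and is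
continuous as a map `ℝ × X_β → ℂ^ℤ` in the product topologies. -/
theorem Fmap_well_defined_and_continuous (K β : ℝ) (hK : 0 < K) (hβ : 0 < β) :
    (∀ c : ℤ → ℂ, memX β c → ∀ n : ℤ,
      Summable (fun k : ℕ =>
        ‖((-1) ^ k / (Nat.factorial (2 * k + 1) : ℂ)) * convPow c (2 * k + 1) n‖)) ∧
    Continuous (fun p : ℝ × {x : ℤ → ℂ // memX β x} => Fmap K p.1 p.2.val) := by
  exact Fmap_well_defined_and_continuous_general K
    (summable_div_abs_add_one_pow β Nat.one_lt_two) (X := {x | memX β x}) fun _ hx => hx.1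
end

section
/- Let K > 0, β > 0, l ≥ 0, and let c ∈ X satisfy c_n = 0 for all |n| > l. Then for every integer p > 1, every x ∈ X_β, and every n ∈ ℤ: |(K/p!)·((c+x)^{*p})_n| ≤ (K/p!)·( |(c^{*p})_n| + Σ_{k=0}^{p-1} binom(p,k) Σ_{j=-lk}^{lk} |(c^{*k})_j| · 10^{p-k-1} β^{p-k}/(|n-j|+1)² ). -/
open scoped Real
open Complex Filter

/-!
Absolutely summable sequences form a commutative ring under convolution, so `(c + x)^{*p}` expands
by the binomial theorem into the terms `binom(p, k) c^{*k} * x^{*(p-k)}`. As `c^{*k}` is supported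
in `[-lk, lk]`, each of these convolutions is a finite sum, and it remains to bound `x^{*(p-k)}`.

For that, put `w n = 1 / (|n| + 1)²`. From `(|n| + 1)² ≤ 2 ((|k| + 1)² + (|n - k| + 1)²)` one gets
`w k * w (n - k) ≤ 2 w n * (w k + w (n - k))`, and summing over `k` with `∑ w = π² / 3 - 1` bounds
the convolution of `w` with itself by `4 (π² / 3 - 1) w ≤ 10 w`. Hence every further convolution
factor bounded by `β w` costs a factor `10 β`.
-/

/-! ### The convolution ring of absolutely summable sequences -/

section Conv

variable {x y z : ℤ → ℂ}

lemma conv_comm (x y : ℤ → ℂ) : conv x y = conv y x := by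
  funext n
  simp only [conv]
  rw [← (Equiv.subLeft n).tsum_eq]
  simp only [Equiv.subLeft_apply, sub_sub_cancel, mul_comm]

lemma zero_conv (x : ℤ → ℂ) : conv 0 x = 0 := by
  funext n
  simp [conv]

lemma convPow_zero_conv (x y : ℤ → ℂ) : conv (convPow x 0) y = y := by
  funext n
  rw [conv, tsum_eq_single 0 fun k hk => by simp [convPow, hk]]
  simp [convPow]

lemma summable_norm_mul_sub (hx : Summable fun n => ‖x n‖) (hy : Summable fun n => ‖y n‖) :
    Summable fun q : ℤ × ℤ => ‖x q.2 * y (q.1 - q.2)‖ := by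
  have shear_injective : Function.Injective fun q : ℤ × ℤ => (q.2, q.1 - q.2) := by
    rintro ⟨n, k⟩ ⟨n', k'⟩ h
    simp only [Prod.mk.injEq] at h ⊢
    lia
  simpa only [Function.comp_def] using (hx.mul_norm hy).comp_injective shear_injective

lemma summable_mul_sub (hx : Summable fun n => ‖x n‖) (hy : Summable fun n => ‖y n‖) (n : ℤ) :
    Summable fun k => x k * y (n - k) :=
  (summable_norm_mul_sub hx hy).of_norm.prod_factor n

lemma summable_norm_conv (hx : Summable fun n => ‖x n‖) (hy : Summable fun n => ‖y n‖) :
    Summable fun n => ‖conv x y n‖ := by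
  have hxy := summable_norm_mul_sub hx hy
  exact hxy.prod.of_nonneg_of_le (fun _ => norm_nonneg _)
    fun n => norm_tsum_le_tsum_norm (hxy.prod_factor n)

lemma conv_add (hx : Summable fun n => ‖x n‖) (hy : Summable fun n => ‖y n‖)
    (hz : Summable fun n => ‖z n‖) : conv x (y + z) = conv x y + conv x z := by
  funext n
  simp only [conv, Pi.add_apply, mul_add]
  exact (summable_mul_sub hx hy n).tsum_add (summable_mul_sub hx hz n)

lemma conv_assoc (hx : Summable fun n => ‖x n‖) (hy : Summable fun n => ‖y n‖)
    (hz : Summable fun n => ‖z n‖) : conv (conv x y) z = conv x (conv y z) := by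
  funext n
  have shear_injective : Function.Injective fun q : ℤ × ℤ => ((q.2, q.1 - q.2), n - q.1) := by
    rintro ⟨m, k⟩ ⟨m', k'⟩ h
    simp only [Prod.mk.injEq] at h ⊢
    lia
  have hxyz : Summable fun q : ℤ × ℤ => x q.2 * y (q.1 - q.2) * z (n - q.1) :=
    (((hx.mul_norm hy).mul_norm hz).comp_injective shear_injective).of_norm
  calc conv (conv x y) z n
      = ∑' m, ∑' k, x k * y (m - k) * z (n - m) := by simp only [conv, tsum_mul_right]
    _ = ∑' k, ∑' m, x k * y (m - k) * z (n - m) := hxyz.prod_symm.tsum_comm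
    _ = ∑' k, x k * ∑' m, y (m - k) * z (n - m) := by simp only [mul_assoc, tsum_mul_left]
    _ = conv x (conv y z) n := tsum_congr fun k => by
      rw [conv, ← (Equiv.addRight k).tsum_eq]
      simp only [Equiv.coe_addRight, add_sub_cancel_right, sub_add_eq_sub_sub_swap]

lemma norm_conv_le_sum {s : Finset ℤ} (hx : ∀ k ∉ s, x k = 0) (y : ℤ → ℂ) (n : ℤ) :
    ‖conv x y n‖ ≤ ∑ k ∈ s, ‖x k‖ * ‖y (n - k)‖ := by
  rw [conv, tsum_eq_sum fun k hk => by rw [hx k hk, zero_mul]]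
  exact norm_sum_le_of_le s fun k _ => norm_mul_le _ _

end Conv

/-- The space `ℓ¹(ℤ)` of absolutely summable two-sided sequences, carrying convolution as its
multiplication. It is a plain additive subgroup, so that the pointwise product is not inherited. -/
def summableSeq : AddSubgroup (ℤ → ℂ) where
  carrier := {x | Summable fun n => ‖x n‖}
  zero_mem' := by simp
  add_mem' hx hy := (hx.add hy).of_nonneg_of_le (fun _ => norm_nonneg _) fun _ => norm_add_le _ _
  neg_mem' hx := by simpa using hx

namespace summableSeq

noncomputable instance : CommRing summableSeq where
  __ := summableSeq.toAddCommGroup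
  mul x y := ⟨conv x y, summable_norm_conv x.2 y.2⟩
  one := ⟨convPow 0 0, summable_of_ne_finset_zero (s := {0}) fun n hn => by
    simpa [convPow] using hn⟩
  mul_comm x y := Subtype.ext (conv_comm x y)
  mul_assoc x y z := Subtype.ext (conv_assoc x.2 y.2 z.2)
  one_mul x := Subtype.ext (convPow_zero_conv 0 x)
  mul_one x := Subtype.ext ((conv_comm _ _).trans (convPow_zero_conv 0 x))
  left_distrib x y z := Subtype.ext (conv_add x.2 y.2 z.2)
  right_distrib x y z := Subtype.ext <| by
    change conv (x + y : ℤ → ℂ) z = conv x z + conv y z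
    simpa only [conv_comm _ (z : ℤ → ℂ)] using conv_add z.2 x.2 y.2
  zero_mul x := Subtype.ext (zero_conv x)
  mul_zero x := Subtype.ext ((conv_comm _ _).trans (zero_conv x))

lemma coe_mul (x y : summableSeq) : ((x * y : summableSeq) : ℤ → ℂ) = conv x y := rfl

lemma coe_pow (x : summableSeq) (k : ℕ) : ((x ^ k : summableSeq) : ℤ → ℂ) = convPow x k := by
  induction k with
  | zero => rfl
  | succ k ih => rw [pow_succ, coe_mul, ih, convPow]

end summableSeq

section ConvPow

variable {c x : ℤ → ℂ}

lemma convPow_one (x : ℤ → ℂ) : convPow x 1 = x :=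
  convPow_zero_conv x x

lemma convPow_add (hc : Summable fun n => ‖c n‖) (hx : Summable fun n => ‖x n‖) (p : ℕ) :
    convPow (c + x) p =
      ∑ k ∈ Finset.range (p + 1), p.choose k • conv (convPow c k) (convPow x (p - k)) := by
  have binomial := congrArg ((↑) : summableSeq → ℤ → ℂ)
    (add_pow (⟨c, hc⟩ : summableSeq) ⟨x, hx⟩ p)
  simpa only [summableSeq.coe_pow, summableSeq.coe_mul, AddSubgroup.coe_add, AddSubgroup.coe_nsmul,
    AddSubgroup.val_finsetSum, ← nsmul_eq_mul'] using binomial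

lemma norm_convPow_add_le (hc : Summable fun n => ‖c n‖) (hx : Summable fun n => ‖x n‖)
    (p : ℕ) (n : ℤ) :
    ‖convPow (c + x) p n‖ ≤ ‖convPow c p n‖ +
      ∑ k ∈ Finset.range p, (p.choose k : ℝ) * ‖conv (convPow c k) (convPow x (p - k)) n‖ := by
  have last_term : conv (convPow c p) (convPow x (p - p)) = convPow c p := by
    rw [Nat.sub_self, conv_comm, convPow_zero_conv]
  rw [convPow_add hc hx, Finset.sum_range_succ, last_term, Nat.choose_self, one_smul, add_comm,
    Pi.add_apply, Finset.sum_apply]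
  exact norm_add_le_of_le le_rfl (norm_sum_le_of_le _ fun k _ => norm_nsmul_le)

lemma convPow_eq_zero_of_lt_abs {l : ℕ} (hc : ∀ n : ℤ, (l : ℤ) < |n| → c n = 0) (k : ℕ) {n : ℤ}
    (hn : (l * k : ℤ) < |n|) : convPow c k n = 0 := by
  induction k generalizing n with
  | zero =>
    have hn0 : n ≠ 0 := by simpa using hn
    simp [convPow, hn0]
  | succ k ih =>
    have terms_eq_zero (j : ℤ) : convPow c k j * c (n - j) = 0 := by
      rcases lt_or_ge (l * k : ℤ) |j| with hj | hj
      · rw [ih hj, zero_mul]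
      · have hnj : (l : ℤ) < |n - j| := by
          have := abs_sub_abs_le_abs_sub n j
          push_cast at hn
          linarith
        rw [hc _ hnj, mul_zero]
    simp only [convPow, conv, terms_eq_zero, tsum_zero]

end ConvPow

/-! ### Quadratic decay -/

/-- The weight `1 / (|n| + 1)²` that measures the decay of a sequence in `X_β`. -/
noncomputable def quadWeight (n : ℤ) : ℝ := 1 / (|(n : ℝ)| + 1) ^ 2

lemma quadWeight_pos (n : ℤ) : 0 < quadWeight n := by
  unfold quadWeight
  positivity

lemma quadWeight_neg (n : ℤ) : quadWeight (-n) = quadWeight n := by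
  simp [quadWeight]

lemma hasSum_quadWeight : HasSum quadWeight (π ^ 2 / 3 - 1) := by
  have quadWeight_succ (n : ℕ) : quadWeight (n + 1) = 1 / ((n + 2 : ℕ) : ℝ) ^ 2 := by
    have : |(n : ℝ) + 1| = n + 1 := abs_of_nonneg (by positivity)
    simp only [quadWeight, Int.cast_add, Int.cast_natCast, Int.cast_one, this]
    push_cast
    ring
  have positive_part : HasSum (fun n : ℕ => quadWeight (n + 1)) (π ^ 2 / 6 - 1) := by
    simp only [quadWeight_succ]
    simpa [Finset.sum_range_succ] using (hasSum_nat_add_iff' 2).mpr hasSum_zeta_two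
  have negative_part : HasSum (fun n : ℕ => quadWeight (-(n + 1))) (π ^ 2 / 6 - 1) := by
    simpa only [quadWeight_neg] using positive_part
  convert positive_part.of_add_one_of_neg_add_one negative_part using 1
  simp only [quadWeight, Int.cast_zero, abs_zero]
  ring

lemma quadWeight_mul_sub_le (n k : ℤ) :
    quadWeight k * quadWeight (n - k) ≤
      2 * quadWeight n * (quadWeight k + quadWeight (n - k)) := by
  have triangle : |(n : ℝ)| ≤ |(k : ℝ)| + |((n - k : ℤ) : ℝ)| := by
    simpa using abs_add_le (k : ℝ) (n - k)
  unfold quadWeight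
  set a := |(k : ℝ)| + 1
  set b := |((n - k : ℤ) : ℝ)| + 1
  set d := |(n : ℝ)| + 1
  have ha : 0 < a := by positivity
  have hb : 0 < b := by positivity
  have hd : 0 < d := by positivity
  have sq_le : d ^ 2 ≤ 2 * (a ^ 2 + b ^ 2) :=
    calc d ^ 2 ≤ (a + b) ^ 2 := by gcongr; linarith
      _ ≤ 2 * (a ^ 2 + b ^ 2) := add_sq_le
  calc 1 / a ^ 2 * (1 / b ^ 2) = d ^ 2 / (a ^ 2 * b ^ 2 * d ^ 2) := by field_simp
    _ ≤ 2 * (a ^ 2 + b ^ 2) / (a ^ 2 * b ^ 2 * d ^ 2) := by gcongr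
    _ = 2 * (1 / d ^ 2) * (1 / a ^ 2 + 1 / b ^ 2) := by field_simp; ring

lemma hasSum_quadWeight_mul_majorant (n : ℤ) :
    HasSum (fun k => 2 * quadWeight n * (quadWeight k + quadWeight (n - k)))
      (2 * quadWeight n * (π ^ 2 / 3 - 1 + (π ^ 2 / 3 - 1))) := by
  have reflected : HasSum (fun k => quadWeight (n - k)) (π ^ 2 / 3 - 1) := by
    simpa only [Function.comp_def, Equiv.subLeft_apply] using
      (Equiv.subLeft n).hasSum_iff.mpr hasSum_quadWeight
  exact (hasSum_quadWeight.add reflected).mul_left _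

lemma summable_quadWeight_mul_sub (n : ℤ) :
    Summable fun k => quadWeight k * quadWeight (n - k) :=
  (hasSum_quadWeight_mul_majorant n).summable.of_nonneg_of_le
    (fun _ => mul_nonneg (quadWeight_pos _).le (quadWeight_pos _).le) (quadWeight_mul_sub_le n)

lemma tsum_quadWeight_mul_sub_le (n : ℤ) :
    ∑' k, quadWeight k * quadWeight (n - k) ≤ 10 * quadWeight n := by
  have pi_sq_le : π ^ 2 ≤ 10 := by nlinarith [Real.pi_lt_d2, Real.pi_pos]
  calc ∑' k, quadWeight k * quadWeight (n - k)
      ≤ 2 * quadWeight n * (π ^ 2 / 3 - 1 + (π ^ 2 / 3 - 1)) :=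
        hasSum_le (quadWeight_mul_sub_le n) (summable_quadWeight_mul_sub n).hasSum
          (hasSum_quadWeight_mul_majorant n)
    _ ≤ 10 * quadWeight n := by nlinarith [quadWeight_pos n]

/-- `HasQuadraticDecay β x` is the decay condition of `X_β` without the symmetry condition. -/
def HasQuadraticDecay (β : ℝ) (x : ℤ → ℂ) : Prop := ∀ n, ‖x n‖ ≤ β * quadWeight n

namespace HasQuadraticDecay

variable {α β : ℝ} {x y : ℤ → ℂ}

lemma nonneg (hx : HasQuadraticDecay β x) : 0 ≤ β :=
  nonneg_of_mul_nonneg_left ((norm_nonneg _).trans (hx 0)) (quadWeight_pos 0)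

lemma summable_norm (hx : HasQuadraticDecay β x) : Summable fun n => ‖x n‖ :=
  (hasSum_quadWeight.summable.mul_left β).of_nonneg_of_le (fun _ => norm_nonneg _) hx

protected lemma conv (hx : HasQuadraticDecay α x) (hy : HasQuadraticDecay β y) :
    HasQuadraticDecay (10 * α * β) (conv x y) := fun n => by
  have terms_le (k : ℤ) :
      ‖x k * y (n - k)‖ ≤ α * β * (quadWeight k * quadWeight (n - k)) :=
    calc ‖x k * y (n - k)‖ ≤ ‖x k‖ * ‖y (n - k)‖ := norm_mul_le _ _
      _ ≤ α * quadWeight k * (β * quadWeight (n - k)) :=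
        mul_le_mul (hx k) (hy _) (norm_nonneg _) ((norm_nonneg _).trans (hx k))
      _ = α * β * (quadWeight k * quadWeight (n - k)) := by ring
  calc ‖conv x y n‖ ≤ α * β * ∑' k, quadWeight k * quadWeight (n - k) :=
        tsum_of_norm_bounded ((summable_quadWeight_mul_sub n).hasSum.mul_left _) terms_le
    _ ≤ α * β * (10 * quadWeight n) :=
        mul_le_mul_of_nonneg_left (tsum_quadWeight_mul_sub_le n) (mul_nonneg hx.nonneg hy.nonneg)
    _ = 10 * α * β * quadWeight n := by ring

lemma convPow_succ (hx : HasQuadraticDecay β x) (m : ℕ) :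
    HasQuadraticDecay (10 ^ m * β ^ (m + 1)) (convPow x (m + 1)) := by
  induction m with
  | zero => simpa [convPow_one] using hx
  | succ m ih =>
    have decay := ih.conv hx
    rwa [show 10 * (10 ^ m * β ^ (m + 1)) * β = 10 ^ (m + 1) * β ^ (m + 1 + 1) by ring] at decay

lemma norm_conv_convPow_le {c : ℤ → ℂ} {s : Finset ℤ} (hc : ∀ j ∉ s, c j = 0)
    (hx : HasQuadraticDecay β x) {m : ℕ} (hm : m ≠ 0) (n : ℤ) :
    ‖conv c (convPow x m) n‖ ≤
      ∑ j ∈ s, ‖c j‖ * 10 ^ (m - 1) * β ^ m / (|((n - j : ℤ) : ℝ)| + 1) ^ 2 := by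
  obtain ⟨m, rfl⟩ := Nat.exists_eq_succ_of_ne_zero hm
  refine (norm_conv_le_sum hc _ n).trans (Finset.sum_le_sum fun j _ => ?_)
  calc ‖c j‖ * ‖convPow x (m + 1) (n - j)‖
      ≤ ‖c j‖ * (10 ^ m * β ^ (m + 1) * quadWeight (n - j)) := by gcongr; exact hx.convPow_succ m _
    _ = ‖c j‖ * 10 ^ m * β ^ (m + 1) / (|((n - j : ℤ) : ℝ)| + 1) ^ 2 := by
      rw [quadWeight]
      ring

end HasQuadraticDecay

theorem perturbed_convPow_estimate_general (K : ℂ) {β : ℝ} {l : ℕ} {c x : ℤ → ℂ}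
    (hsupp : ∀ n : ℤ, (l : ℤ) < |n| → c n = 0)
    (hx : ∀ n : ℤ, ‖x n‖ ≤ β / (|(n : ℝ)| + 1) ^ 2) (p : ℕ) (n : ℤ) :
    ‖(K / (Nat.factorial p : ℂ)) * convPow (c + x) p n‖ ≤
      (‖K‖ / (Nat.factorial p : ℝ)) * (‖convPow c p n‖ +
        ∑ k ∈ Finset.range p, (p.choose k : ℝ) *
          ∑ j ∈ Finset.Icc (-(l * k : ℤ)) (l * k : ℤ),
            ‖convPow c k j‖ * 10 ^ (p - k - 1) * β ^ (p - k) /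
              (|((n - j : ℤ) : ℝ)| + 1) ^ 2) := by
  have decay : HasQuadraticDecay β x := fun m => by
    simpa only [quadWeight, mul_one_div] using hx m
  have convPow_support (k : ℕ) : ∀ j ∉ Finset.Icc (-(l * k : ℤ)) (l * k), convPow c k j = 0 :=
    fun j hj => convPow_eq_zero_of_lt_abs hsupp k <| by
      rwa [Finset.mem_Icc, ← abs_le, not_le] at hj
  have summable_c : Summable fun m => ‖c m‖ :=
    summable_of_ne_finset_zero (s := Finset.Icc (-(l : ℤ)) l) fun m hm => by
      rw [Finset.mem_Icc, ← abs_le, not_le] at hm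
      rw [hsupp m hm, norm_zero]
  rw [norm_mul, norm_div, Complex.norm_natCast]
  gcongr
  refine (norm_convPow_add_le summable_c decay.summable_norm p n).trans ?_
  gcongr with k hk
  exact decay.norm_conv_convPow_le (convPow_support k)
    (Nat.sub_ne_zero_of_lt (Finset.mem_range.mp hk)) n

/-- Lemma `lem:srodek`: refined estimate of `(K/p!)((c+x)^{*p})_n` for
`c` supported in `[-l,l]` and `x ∈ X_β`, with `C = 10`. -/
theorem perturbed_convPow_estimate (K β : ℝ) (hK : 0 < K) (hβ : 0 < β) (l : ℕ)
    (c : ℤ → ℂ) (hcX : ∃ β' > 0, memX β' c) (hsupp : ∀ n : ℤ, (l : ℤ) < |n| → c n = 0)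
    (p : ℕ) (hp : 1 < p) (x : ℤ → ℂ) (hx : memX β x) :
    ∀ n : ℤ,
      ‖(K / (Nat.factorial p : ℂ)) * convPow (c + x) p n‖ ≤
        (K / (Nat.factorial p : ℝ)) * (‖convPow c p n‖ +
          ∑ k ∈ Finset.range p, (p.choose k : ℝ) *
            ∑ j ∈ Finset.Icc (-(l * k : ℤ)) (l * k : ℤ),
              ‖convPow c k j‖ * 10 ^ (p - k - 1) * β ^ (p - k) / (|((n - j : ℤ) : ℝ)| + 1) ^ 2) := by
  simpa [abs_of_pos hK] using perturbed_convPow_estimate_general K hsupp hx.1 p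
end
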